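/- Let k be a positive integer, let G be a finite simple graph, and let S and S' be bottlenecks of G with S' ⊊ S. Then there exists an S'-branch H such that (S ∖ S') ∪ ⋃_{H' an S-branch} V(H') ⊆ V(H), and every S'-branch different from H is a connected component of G−S that is not an S-branch. -/

import Mathlib

/-!
Fix `s ∈ S \ S'` and let `H` be the
component of `G - S'` containing `s` (`exists_isCompIn`). Every `S`-branch `C` is a connected set
avoiding `S'` and adjacent to `s`, so it meets `H`, and `C ⊆ H` because a
component absorbs every connected set it meets (`IsCompIn.subset_of_connected`). Each vertex of
`S \ S'` is adjacent to such a `C`, hence lies in `H`; each vertex of `S'` is adjacent to such a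
`C` too, hence `N(H) = S'` and `H` is an `S'`-branch. Any other `S'`-branch is disjoint from `H`,
hence from `S`, so it is still a component of `G - S`, and its neighborhood is `S' ≠ S`.
-/

open SimpleGraph

variable {V : Type*}

/-- `N_G(Y)`: the set of vertices outside `Y` having a neighbor in `Y`. -/
def nbhdSet (G : SimpleGraph V) (Y : Set V) : Set V :=
  {v | v ∉ Y ∧ ∃ u ∈ Y, G.Adj u v}

/-- `C` is a connected component of the subgraph of `G` induced by `U`. -/
def IsCompIn (G : SimpleGraph V) (U C : Set V) : Prop :=
  C.Nonempty ∧ C ⊆ U ∧ (G.induce C).Connected ∧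
    ∀ u ∈ C, ∀ v ∈ U, G.Adj u v → v ∈ C

/-- `C` is a connected component of `G - S`. -/
def IsCompOf (G : SimpleGraph V) (S C : Set V) : Prop :=
  IsCompIn G Sᶜ C

/-- `C` is an `S`-branch: a connected component of `G - S` with `N_G(C) = S`. -/
def IsBranch (G : SimpleGraph V) (S C : Set V) : Prop :=
  IsCompOf G S C ∧ nbhdSet G C = S

/-- `S` is a bottleneck (for the width parameter `k`): a nonempty set with
at least `2k+1` `S`-branches. -/
def IsBottleneck (G : SimpleGraph V) (k : ℕ) (S : Set V) : Prop :=
  S.Nonempty ∧ 2 * k + 1 ≤ {C : Set V | IsBranch G S C}.ncard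

/-- `(X 0, …, X (l-1))` is a path decomposition of `G`. -/
def IsPathDecomp (G : SimpleGraph V) (l : ℕ) (X : ℕ → Set V) : Prop :=
  (∀ v, ∃ i < l, v ∈ X i) ∧
  (∀ u v, G.Adj u v → ∃ i < l, u ∈ X i ∧ v ∈ X i) ∧
  (∀ i j m, i ≤ j → j ≤ m → m < l → X i ∩ X m ⊆ X j)

/-- The width of a path decomposition: the maximum bag size minus one. -/
noncomputable def pdWidth (l : ℕ) (X : ℕ → Set V) : ℕ :=
  ((Finset.range l).sup fun i => (X i).ncard) - 1

/-- The set of indices of bags meeting the vertex set `C`. -/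
def supp (l : ℕ) (X : ℕ → Set V) (C : Set V) : Set ℕ :=
  {t | t < l ∧ (C ∩ X t).Nonempty}

/-- `a(C)`: the first index of a bag meeting `C`. -/
noncomputable def firstIdx (l : ℕ) (X : ℕ → Set V) (C : Set V) : ℕ :=
  sInf (supp l X C)

/-- `b(C)`: the last index of a bag meeting `C`. -/
noncomputable def lastIdx (l : ℕ) (X : ℕ → Set V) (C : Set V) : ℕ :=
  sSup (supp l X C)

/-- `C` is an in-branch of `S` with respect to the decomposition:
an `S`-branch with `S ⊆ X (a C)` and `S ⊆ X (b C)`. -/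
def IsInBranch (G : SimpleGraph V) (l : ℕ) (X : ℕ → Set V) (S C : Set V) : Prop :=
  IsBranch G S C ∧ S ⊆ X (firstIdx l X C) ∧ S ⊆ X (lastIdx l X C)

/-- `α(S)`: the minimum of `a(H)` over in-branches `H` of `S`. -/
noncomputable def botStart (G : SimpleGraph V) (l : ℕ) (X : ℕ → Set V) (S : Set V) : ℕ :=
  sInf {i | ∃ C, IsInBranch G l X S C ∧ i = firstIdx l X C}

/-- `β(S)`: the maximum of `b(H)` over in-branches `H` of `S`. -/
noncomputable def botEnd (G : SimpleGraph V) (l : ℕ) (X : ℕ → Set V) (S : Set V) : ℕ :=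
  sSup {i | ∃ C, IsInBranch G l X S C ∧ i = lastIdx l X C}

/-- The interval `I(S,P) = [α(S), β(S)]` of a bottleneck `S`. -/
noncomputable def botInterval (G : SimpleGraph V) (l : ℕ) (X : ℕ → Set V) (S : Set V) : Set ℕ :=
  Set.Icc (botStart G l X S) (botEnd G l X S)

/-- A pre-branch of `S`. -/
def IsPreBranch (G : SimpleGraph V) (l : ℕ) (X : ℕ → Set V) (S C : Set V) : Prop :=
  IsBranch G S C ∧ ¬ IsInBranch G l X S C ∧ firstIdx l X C < botStart G l X S

/-- A post-branch of `S`. -/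
def IsPostBranch (G : SimpleGraph V) (l : ℕ) (X : ℕ → Set V) (S C : Set V) : Prop :=
  IsBranch G S C ∧ ¬ IsInBranch G l X S C ∧
    botStart G l X S ≤ firstIdx l X C ∧ botEnd G l X S < lastIdx l X C

/-- `C` waits in the interval `[i, j]` of the decomposition. -/
def WaitsIn (X : ℕ → Set V) (C : Set V) (i j : ℕ) : Prop :=
  ∀ t, i ≤ t → t ≤ j → C ∩ X t = C ∩ X i

/-- The decomposition is `S`-structured: every component of `G - S` that is not an
`S`-branch, and every pre- or post-branch of `S`, waits in `I(S,P)`. -/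
def IsStructured (G : SimpleGraph V) (l : ℕ) (X : ℕ → Set V) (S : Set V) : Prop :=
  ∀ C : Set V,
    ((IsCompOf G S C ∧ ¬ IsBranch G S C) ∨ IsPreBranch G l X S C ∨ IsPostBranch G l X S C) →
    WaitsIn X C (botStart G l X S) (botEnd G l X S)

/-- The decomposition is `I`-connected: every connected component of the subgraph
induced by any prefix of bags contains a vertex of `I`. -/
def IsIConn (G : SimpleGraph V) (l : ℕ) (X : ℕ → Set V) (I : Set V) : Prop :=
  ∀ i < l, ∀ C : Set V, IsCompIn G {v | ∃ j ≤ i, v ∈ X j} C → (C ∩ I).Nonempty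

/-- A component absorbs every connected set that it meets. -/
lemma IsCompIn.subset_of_connected {G : SimpleGraph V} {U C A : Set V} (hC : IsCompIn G U C)
    (hAU : A ⊆ U) (hA : (G.induce A).Connected) {x : V} (hxA : x ∈ A) (hxC : x ∈ C) :
    A ⊆ C := by
  have walk_stays : ∀ (a b : A), (G.induce A).Walk a b → (a : V) ∈ C → (b : V) ∈ C := by
    intro a b p
    induction p with
    | nil => exact id
    | @cons u v w huv _ ih => exact fun hu => ih (hC.2.2.2 u hu v (hAU v.2) huv)
  intro y hy
  obtain ⟨p⟩ := hA.preconnected ⟨x, hxA⟩ ⟨y, hy⟩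
  exact walk_stays _ _ p hxC

lemma IsCompIn.eq_of_mem {G : SimpleGraph V} {U C D : Set V} (hC : IsCompIn G U C)
    (hD : IsCompIn G U D) {x : V} (hxC : x ∈ C) (hxD : x ∈ D) : C = D :=
  (hD.subset_of_connected hC.2.1 hC.2.2.1 hxC hxD).antisymm
    (hC.subset_of_connected hD.2.1 hD.2.2.1 hxD hxC)

/-- Every vertex of `U` lies in a component of `G[U]`, obtained as the union of all connected
subsets of `U` containing that vertex. -/
lemma exists_isCompIn (G : SimpleGraph V) {U : Set V} {x : V} (hx : x ∈ U) :
    ∃ C, IsCompIn G U C ∧ x ∈ C := by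
  let F : Set (Set V) := {A | x ∈ A ∧ A ⊆ U ∧ (G.induce A).Connected}
  have singleton_mem : {x} ∈ F :=
    ⟨rfl, by simpa using hx, ⟨Preconnected.of_subsingleton⟩⟩
  have hxF : x ∈ ⋃₀ F := ⟨{x}, singleton_mem, rfl⟩
  refine ⟨⋃₀ F, ⟨⟨x, hxF⟩, Set.sUnion_subset fun A hA => hA.2.1, ?_, ?_⟩, hxF⟩
  · exact induce_sUnion_connected_of_pairwise_not_disjoint ⟨_, singleton_mem⟩
      (fun hA hB => ⟨x, hA.1, hB.1⟩) (fun hA => hA.2.2)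
  · rintro u ⟨A, ⟨hxA, hAU, hA⟩, huA⟩ v hv huv
    refine ⟨A ∪ {v}, ⟨Or.inl hxA, Set.union_subset hAU (by simpa using hv), ?_⟩, Or.inr rfl⟩
    exact connected_induce_union hA.preconnected Preconnected.of_subsingleton huA
      (Set.mem_singleton v) huv

/-- for bottlenecks `S' ⊊ S` there is an `S'`-branch `H` containing
`S ∖ S'` and all `S`-branches, and every other `S'`-branch is a connected component
of `G - S` that is not an `S`-branch. -/
theorem stmt5 [Fintype V] (k : ℕ) (hk : 1 ≤ k) (G : SimpleGraph V) (S S' : Set V)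
    (hS : IsBottleneck G k S) (hS' : IsBottleneck G k S') (hss : S' ⊂ S) :
    ∃ H : Set V, IsBranch G S' H ∧
      (S \ S') ∪ {v | ∃ C : Set V, IsBranch G S C ∧ v ∈ C} ⊆ H ∧
      ∀ H' : Set V, IsBranch G S' H' → H' ≠ H →
        IsCompOf G S H' ∧ ¬ IsBranch G S H' := by
  obtain ⟨s, hsS, hsS'⟩ := Set.exists_of_ssubset hss
  obtain ⟨H, hH, hsH⟩ := exists_isCompIn G (U := S'ᶜ) hsS'
  have branch_sub : ∀ C, IsBranch G S C → C ⊆ H := by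
    intro C hC
    have hCS' : C ⊆ S'ᶜ := hC.1.2.1.trans (Set.compl_subset_compl.2 hss.1)
    obtain ⟨-, u, huC, hus⟩ : s ∈ nbhdSet G C := hC.2.symm ▸ hsS
    exact hH.subset_of_connected hCS' hC.1.2.2.1 huC (hH.2.2.2 s hsH u (hCS' huC) hus.symm)
  obtain ⟨C₀, hC₀⟩ : {C : Set V | IsBranch G S C}.Nonempty :=
    Set.nonempty_of_ncard_ne_zero (by have := hS.2; omega)
  have adj_of_mem : ∀ v ∈ S, ∃ u ∈ H, G.Adj u v := by
    intro v hv
    obtain ⟨-, u, huC, huv⟩ : v ∈ nbhdSet G C₀ := hC₀.2.symm ▸ hv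
    exact ⟨u, branch_sub C₀ hC₀ huC, huv⟩
  have diff_sub : S \ S' ⊆ H := by
    rintro v ⟨hvS, hvS'⟩
    obtain ⟨u, huH, huv⟩ := adj_of_mem v hvS
    exact hH.2.2.2 u huH v hvS' huv
  refine ⟨H, ⟨hH, ?_⟩, ?_, ?_⟩
  · ext v
    constructor
    · rintro ⟨hvH, u, huH, huv⟩
      by_contra hvS'
      exact hvH (hH.2.2.2 u huH v hvS' huv)
    · exact fun hv => ⟨fun hvH => hH.2.1 hvH hv, adj_of_mem v (hss.1 hv)⟩
  · rintro v (hv | ⟨C, hC, hvC⟩)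
    · exact diff_sub hv
    · exact branch_sub C hC hvC
  · rintro H' ⟨hH', hN⟩ hne
    refine ⟨⟨hH'.1, ?_, hH'.2.2.1, ?_⟩, fun hB => hss.ne (hN.symm.trans hB.2)⟩
    · exact fun v hv hvS => hne (hH'.eq_of_mem hH hv (diff_sub ⟨hvS, hH'.2.1 hv⟩))
    · exact fun u hu v hv => hH'.2.2.2 u hu v fun hvS' => hv (hss.1 hvS')
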